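/- For every s-graphon μ, the shape C(μ) (defined as the weak closure of {Φ(f,μ) : f ∈ FDC}) equals the weak closure of {Φ(f,μ) : f ∈ FD}, where FD is the set of ALL bounded Borel fairly distributed functions; that is, requiring continuity of the fairly distributed functions in the definition of the shape is irrelevant. -/

import Mathlib

open MeasureTheory Topology Filter

noncomputable section

/-- The unit square `[0,1]²`. -/
abbrev Sq : Type := unitInterval × unitInterval

/-- Convergence of a sequence of subsets in the Vietoris topology
(upper + lower Vietoris convergence). -/
def VietorisTendsto {X : Type*} [TopologicalSpace X] (A : ℕ → Set X) (B : Set X) : Prop :=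
  (∀ U : Set X, IsOpen U → B ⊆ U → ∀ᶠ n in atTop, A n ⊆ U) ∧
  (∀ U : Set X, IsOpen U → (B ∩ U).Nonempty → ∀ᶠ n in atTop, (A n ∩ U).Nonempty)

/-- A measure on the unit square is symmetric if it is invariant under the coordinate swap. -/
def IsSymmSq (μ : Measure Sq) : Prop := μ.map Prod.swap = μ

/-- s-graphons: symmetric Borel probability measures on the unit square,
with the weak topology. -/
def SGraphon : Type := {μ : ProbabilityMeasure Sq // IsSymmSq (μ : Measure Sq)}

instance : TopologicalSpace SGraphon :=
  inferInstanceAs (TopologicalSpace {μ : ProbabilityMeasure Sq // IsSymmSq (μ : Measure Sq)})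

/-- The underlying measure of an s-graphon. -/
def SGraphon.toMeasure (μ : SGraphon) : Measure Sq := (μ.1 : Measure Sq)

/-- A non-negative bounded Borel function on the unit square is fairly distributed
if all its horizontal and vertical sections integrate (w.r.t. Lebesgue measure) to 1. -/
structure FairlyDistributed (f : Sq → ℝ) : Prop where
  measurable : Measurable f
  nonneg : ∀ p, 0 ≤ f p
  bounded : ∃ C : ℝ, ∀ p, f p ≤ C
  row : ∀ x : unitInterval, ∫ v, f (x, v) = 1
  col : ∀ y : unitInterval, ∫ u, f (u, y) = 1

/-- The density `φ(f,μ)`. -/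
def phiFn (f : Sq → ℝ) (μ : Measure Sq) (p : Sq) : ℝ :=
  ∫ q, f (q.1, p.1) * f (q.2, p.2) ∂μ

/-- The measure `Φ(f,μ)`, with density `φ(f,μ)` w.r.t. 2-dimensional Lebesgue measure. -/
def PhiMeas (f : Sq → ℝ) (μ : Measure Sq) : Measure Sq :=
  volume.withDensity fun p => ENNReal.ofReal (phiFn f μ p)

/-- The shape of a measure `μ` on the unit square: the weak closure of the set of
(s-graphons corresponding to) the measures `Φ(f,μ)`, `f` continuous fairly distributed. -/
def shapeM (μ : Measure Sq) : Set SGraphon :=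
  closure {ν : SGraphon | ∃ f : Sq → ℝ, FairlyDistributed f ∧ Continuous f ∧
    ν.toMeasure = PhiMeas f μ}

/-- The shape `C(μ)` of an s-graphon. -/
def shape (μ : SGraphon) : Set SGraphon := shapeM μ.toMeasure

/-- A fractional partition into `k` parts: non-negative Borel functions on `[0,1]`
summing to the constant function 1, each integrating to `1/k`. -/
def IsFracPartition (k : ℕ) (f : Fin k → unitInterval → ℝ) : Prop :=
  (∀ i, Measurable (f i)) ∧ (∀ i x, 0 ≤ f i x) ∧ (∀ x, ∑ i, f i x = 1) ∧
    ∀ i, ∫ x, f i x = 1 / k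

/-- The `k`-shape `C(μ,k)`: the closure in `ℝ^{k×k}` of the set of density matrices of
fractional partitions into `k` parts. -/
def kShape (μ : Measure Sq) (k : ℕ) : Set (Matrix (Fin k) (Fin k) ℝ) :=
  closure {M | ∃ f : Fin k → unitInterval → ℝ, IsFracPartition k f ∧
    ∀ i j, M i j = ∫ p, f i p.1 * f j p.2 ∂μ}

/-- `M_k^*`: symmetric `k×k` matrices with non-negative entries summing to 1. -/
def Mstar (k : ℕ) : Set (Matrix (Fin k) (Fin k) ℝ) :=
  {M | M.IsSymm ∧ (∀ i j, 0 ≤ M i j) ∧ ∑ i, ∑ j, M i j = 1}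

/-- The index `i` (0-based) with `u ∈ [i/k, (i+1)/k)` (and `i = k-1` for `u = 1`). -/
def gridIdx (k : ℕ) (hk : 0 < k) (u : unitInterval) : Fin k :=
  ⟨min ⌊(u : ℝ) * k⌋₊ (k - 1), lt_of_le_of_lt (min_le_right _ _) (Nat.sub_lt hk one_pos)⟩

/-- The measure `μ_M` associated to a `k×k` matrix `M`: its density w.r.t. 2-dimensional
Lebesgue measure equals `k² M(i,j)` on the square `[i/k,(i+1)/k) × [j/k,(j+1)/k)` (0-based). -/
def muM {k : ℕ} (M : Matrix (Fin k) (Fin k) ℝ) : Measure Sq :=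
  if hk : 0 < k then
    volume.withDensity fun p =>
      ENNReal.ofReal ((k : ℝ) ^ 2 * M (gridIdx k hk p.1) (gridIdx k hk p.2))
  else 0

/-- `C̃(μ,k)`: the `k`-shape of `μ`, interpreted as a set of s-graphons. -/
def kShapeTilde (μ : Measure Sq) (k : ℕ) : Set SGraphon :=
  {ν : SGraphon | ∃ M ∈ kShape μ k, ν.toMeasure = muM M}

/-- The interval `I_i = [i/k, (i+1)/k)` (0-based), with `I_{k-1} = [(k-1)/k, 1]`,
as a subset of `[0,1]`. -/
def Ik (k : ℕ) (i : Fin k) : Set unitInterval :=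
  if (i : ℕ) + 1 = k then Subtype.val ⁻¹' Set.Icc (((i : ℕ) : ℝ) / k) 1
  else Subtype.val ⁻¹' Set.Ico (((i : ℕ) : ℝ) / k) ((((i : ℕ) : ℝ) + 1) / k)

/-!
What needs proof is that every `Φ(f,μ)` with `f ∈ FD` is a limit of such measures with `f ∈ FDC`.
Let `m` be the sum of the two marginals of `μ` and `λ`. Since fairly distributed functions have
unit rows, `φ(f,μ)` and `φ(g,μ)` differ in `L¹(λ²)` by at most the `L¹(m × λ)` distance of `f` and
`g`; and `L¹` convergence of densities implies weak convergence. So it suffices to approximate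
`f ∈ FD` in `L¹(m × λ)` by continuous fairly distributed functions.

Start from a continuous `h` close to `f` with the same bounds, scale down its rows and then its
columns of mass larger than `1`, and add the rank-one function built from the remaining row and
column deficits. Each correction is controlled by the defect of the row or column masses of the
current function from `1`, hence by its distance to `f`; for the columns this uses `λ ≤ m`.
-/

open scoped ENNReal NNReal

section L1Distance

variable {X Y : Type*} [MeasurableSpace X] [MeasurableSpace Y]

lemma lintegral_edist_integral_le {E : Type*} [NormedAddCommGroup E] [NormedSpace ℝ E]
    {m : Measure X} {ν : Measure Y} [SFinite m] [SFinite ν] {f h : X × Y → E}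
    (hf : Integrable f (m.prod ν)) (hh : Integrable h (m.prod ν)) :
    ∫⁻ x, edist (∫ y, f (x, y) ∂ν) (∫ y, h (x, y) ∂ν) ∂m ≤
      ∫⁻ p, edist (f p) (h p) ∂(m.prod ν) := by
  rw [lintegral_prod _ (hf.1.edist hh.1)]
  refine lintegral_mono_ae ?_
  filter_upwards [hf.prod_right_ae, hh.prod_right_ae] with x hfx hhx
  exact edist_integral_le_lintegral_edist hfx hhx

lemma edist_mul_mul_le_edist_mul_enorm_add {R : Type*} [NormedRing R] (a b c d : R) :
    edist (a * b) (c * d) ≤ edist a c * ‖b‖ₑ + ‖c‖ₑ * edist b d := by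
  have hsplit : a * b - c * d = (a - c) * b + c * (b - d) := by noncomm_ring
  have hmul : ∀ r s : R, ‖r * s‖ₑ ≤ ‖r‖ₑ * ‖s‖ₑ := fun r s ↦ by
    simpa only [enorm, ← ENNReal.coe_mul, ENNReal.coe_le_coe] using nnnorm_mul_le r s
  simp only [edist_eq_enorm_sub, hsplit]
  exact (enorm_add_le ((a - c) * b) (c * (b - d))).trans (add_le_add (hmul _ _) (hmul _ _))

lemma exists_continuous_mem_Icc_lintegral_edist_le {Ω : Type*} [TopologicalSpace Ω]
    [NormalSpace Ω] [MeasurableSpace Ω] [BorelSpace Ω] {P : Measure Ω} [P.WeaklyRegular]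
    {f : Ω → ℝ} (hf : Integrable f P) {a b : ℝ} (hfab : ∀ x, f x ∈ Set.Icc a b)
    (hab : a ≤ b) {ε : ℝ≥0∞} (hε : ε ≠ 0) :
    ∃ g : Ω → ℝ, Continuous g ∧ (∀ x, g x ∈ Set.Icc a b) ∧ ∫⁻ x, edist (f x) (g x) ∂P ≤ ε := by
  obtain ⟨g, hg, -⟩ := hf.exists_boundedContinuous_lintegral_sub_le hε
  refine ⟨fun x ↦ Set.projIcc a b hab (g x), by fun_prop, fun x ↦ Subtype.coe_prop _,
    (lintegral_mono fun x ↦ ?_).trans hg⟩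
  have hproj : Set.projIcc a b hab (f x) = f x := by
    rw [Set.projIcc_of_mem hab (hfab x)]
  calc edist (f x) (Set.projIcc a b hab (g x))
      = edist (Set.projIcc a b hab (f x)) (Set.projIcc a b hab (g x)) := by
        rw [Subtype.edist_eq, hproj]
    _ ≤ edist (f x) (g x) := by
        simpa only [ENNReal.coe_one, one_mul] using LipschitzWith.projIcc hab (f x) (g x)
    _ = ‖f x - g x‖ₑ := edist_eq_enorm_sub _ _

lemma tendsto_of_tendsto_lintegral_edist_density {Ω ι : Type*} [TopologicalSpace Ω]
    [MeasurableSpace Ω] [OpensMeasurableSpace Ω] {ρ : Measure Ω} {l : Filter ι}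
    {P : ι → ProbabilityMeasure Ω} {Q : ProbabilityMeasure Ω} {φ : ι → Ω → ℝ} {ψ : Ω → ℝ}
    (hφ : ∀ i, Integrable (φ i) ρ) (hψ : Integrable ψ ρ)
    (hφ0 : ∀ i x, 0 ≤ φ i x) (hψ0 : ∀ x, 0 ≤ ψ x)
    (hP : ∀ i, (P i : Measure Ω) = ρ.withDensity fun x ↦ ENNReal.ofReal (φ i x))
    (hQ : (Q : Measure Ω) = ρ.withDensity fun x ↦ ENNReal.ofReal (ψ x))
    (hlim : Tendsto (fun i ↦ ∫⁻ x, edist (φ i x) (ψ x) ∂ρ) l (𝓝 0)) :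
    Tendsto P l (𝓝 Q) := by
  have integral_density : ∀ {θ : Ω → ℝ}, Integrable θ ρ → (∀ x, 0 ≤ θ x) → ∀ h : Ω → ℝ,
      ∫ x, h x ∂(ρ.withDensity fun x ↦ ENNReal.ofReal (θ x)) = ∫ x, θ x * h x ∂ρ := by
    intro θ hθ hθ0 h
    rw [integral_withDensity_eq_integral_toReal_smul₀ hθ.aemeasurable.ennreal_ofReal
      (Eventually.of_forall fun _ ↦ ENNReal.ofReal_lt_top)]
    simp only [ENNReal.toReal_ofReal (hθ0 _), smul_eq_mul]
  rw [ProbabilityMeasure.tendsto_iff_forall_integral_tendsto]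
  intro h
  have hint : ∀ {θ : Ω → ℝ}, Integrable θ ρ → Integrable (fun x ↦ θ x * h x) ρ := fun hθ ↦
    hθ.mul_bdd h.continuous.aestronglyMeasurable (Eventually.of_forall h.norm_coe_le_norm)
  simp only [hP, hQ, integral_density (hφ _) (hφ0 _), integral_density hψ hψ0]
  refine tendsto_integral_of_L1 _ (hint hψ).1 (Eventually.of_forall fun i ↦ hint (hφ i)) ?_
  have hbound : ∀ i, ∫⁻ x, ‖φ i x * h x - ψ x * h x‖ₑ ∂ρ ≤
      (∫⁻ x, edist (φ i x) (ψ x) ∂ρ) * ‖h‖ₑ := fun i ↦ by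
    rw [← lintegral_mul_const' _ _ enorm_ne_top]
    refine lintegral_mono fun x ↦ ?_
    rw [← sub_mul, enorm_mul, edist_eq_enorm_sub]
    gcongr
    exact enorm_le_iff_norm_le.2 (h.norm_coe_le_norm x)
  refine tendsto_of_tendsto_of_tendsto_of_le_of_le tendsto_const_nhds ?_ (fun _ ↦ zero_le)
    hbound
  simpa using ENNReal.Tendsto.mul_const hlim (.inr enorm_ne_top)

end L1Distance

section Capping

variable {X Y : Type*}

/-- The function obtained from `h` by scaling every row of `ν`-mass larger than `1` down to
mass `1`, leaving the other rows unchanged. -/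
def rowCap [MeasurableSpace Y] (ν : Measure Y) (h : X × Y → ℝ) (p : X × Y) : ℝ :=
  h p / max 1 (∫ y, h (p.1, y) ∂ν)

/-- The function obtained from `h` by scaling every column of `ν`-mass larger than `1` down to
mass `1`, leaving the other columns unchanged. -/
def colCap [MeasurableSpace X] (ν : Measure X) (h : X × Y → ℝ) (p : X × Y) : ℝ :=
  h p / max 1 (∫ x, h (x, p.2) ∂ν)

section Pointwise

variable [MeasurableSpace Y] (ν : Measure Y) {h : X × Y → ℝ}

lemma rowCap_nonneg {p : X × Y} (hp : 0 ≤ h p) : 0 ≤ rowCap ν h p :=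
  div_nonneg hp (zero_le_one.trans (le_max_left _ _))

lemma rowCap_le_self {p : X × Y} (hp : 0 ≤ h p) : rowCap ν h p ≤ h p :=
  div_le_self hp (le_max_left _ _)

lemma integral_rowCap_le_one (h : X × Y → ℝ) (x : X) : ∫ y, rowCap ν h (x, y) ∂ν ≤ 1 := by
  simp only [rowCap, integral_div]
  exact div_le_one_of_le₀ (le_max_right _ _) (zero_le_one.trans (le_max_left _ _))

lemma edist_rowCap_le {C : ℝ≥0} {p : X × Y} (hp : h p ∈ Set.Icc 0 (C : ℝ)) :
    edist (h p) (rowCap ν h p) ≤ C * edist 1 (∫ y, h (p.1, y) ∂ν) := by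
  set r := ∫ y, h (p.1, y) ∂ν
  have hM : 1 ≤ max 1 r := le_max_left _ _
  have hexcess : max 1 r - 1 ≤ |1 - r| :=
    sub_le_iff_le_add.2 <|
      max_le (by linarith [abs_nonneg (1 - r)]) (by linarith [neg_abs_le (1 - r)])
  have hloss : h p - rowCap ν h p = rowCap ν h p * (max 1 r - 1) := by
    have : h p = rowCap ν h p * max 1 r := (div_mul_cancel₀ _ (by positivity)).symm
    linarith
  have hreal : |h p - rowCap ν h p| ≤ C * |1 - r| := by
    rw [hloss, abs_of_nonneg (mul_nonneg (rowCap_nonneg ν hp.1) (sub_nonneg.2 hM))]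
    exact mul_le_mul ((rowCap_le_self ν hp.1).trans hp.2) hexcess (sub_nonneg.2 hM) C.2
  rw [edist_dist, edist_dist, Real.dist_eq, Real.dist_eq, ← ENNReal.ofReal_coe_nnreal,
    ← ENNReal.ofReal_mul C.coe_nonneg]
  exact ENNReal.ofReal_le_ofReal hreal

end Pointwise

section Distance

variable [MeasurableSpace X] [MeasurableSpace Y] {f h : X × Y → ℝ} {C : ℝ≥0}

lemma lintegral_edist_rowCap_le {m : Measure X} {ν ν' : Measure Y} [SFinite m] [SFinite ν]
    [SFinite ν'] (hν : ν ≤ ν') (hf : Integrable f (m.prod ν')) (hh : Integrable h (m.prod ν'))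
    (hf1 : ∀ x, ∫ y, f (x, y) ∂ν = 1) (hhC : ∀ p, h p ∈ Set.Icc 0 (C : ℝ)) :
    ∫⁻ p, edist (f p) (rowCap ν h p) ∂(m.prod ν') ≤
      (1 + C * ν' Set.univ) * ∫⁻ p, edist (f p) (h p) ∂(m.prod ν') := by
  have hprod : m.prod ν ≤ m.prod ν' := Measure.prod_mono le_rfl hν
  have hhν := hh.mono_measure hprod
  have hrow : AEMeasurable (fun x ↦ edist 1 (∫ y, h (x, y) ∂ν)) m :=
    aestronglyMeasurable_const.edist hhν.integral_prod_left.1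
  have hcap : ∫⁻ p, edist (h p) (rowCap ν h p) ∂(m.prod ν') ≤
      C * ν' Set.univ * ∫⁻ p, edist (f p) (h p) ∂(m.prod ν') :=
    calc ∫⁻ p, edist (h p) (rowCap ν h p) ∂(m.prod ν')
        ≤ ∫⁻ p, edist 1 (∫ y, h (p.1, y) ∂ν) * C ∂(m.prod ν') :=
          lintegral_mono fun p ↦ (edist_rowCap_le ν (hhC p)).trans_eq (mul_comm _ _)
      _ = C * ν' Set.univ * ∫⁻ x, edist (∫ y, f (x, y) ∂ν) (∫ y, h (x, y) ∂ν) ∂m := by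
          rw [lintegral_prod_mul hrow aemeasurable_const, lintegral_const, mul_comm]
          simp only [hf1]
      _ ≤ C * ν' Set.univ * ∫⁻ p, edist (f p) (h p) ∂(m.prod ν') := by
          gcongr
          exact (lintegral_edist_integral_le (hf.mono_measure hprod) hhν).trans
            (lintegral_mono' hprod le_rfl)
  calc ∫⁻ p, edist (f p) (rowCap ν h p) ∂(m.prod ν')
      ≤ ∫⁻ p, (edist (f p) (h p) + edist (h p) (rowCap ν h p)) ∂(m.prod ν') :=
        lintegral_mono fun p ↦ edist_triangle _ _ _
    _ = ∫⁻ p, edist (f p) (h p) ∂(m.prod ν') + ∫⁻ p, edist (h p) (rowCap ν h p) ∂(m.prod ν') :=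
        lintegral_add_left' (hf.1.edist hh.1) _
    _ ≤ (1 + C * ν' Set.univ) * ∫⁻ p, edist (f p) (h p) ∂(m.prod ν') := by
        rw [add_mul, one_mul]
        gcongr

lemma lintegral_edist_colCap_le {m m' : Measure X} {ν : Measure Y} [SFinite m] [SFinite m']
    [SFinite ν] (hm : m ≤ m') (hf : Integrable f (m'.prod ν)) (hh : Integrable h (m'.prod ν))
    (hf1 : ∀ y, ∫ x, f (x, y) ∂m = 1) (hhC : ∀ p, h p ∈ Set.Icc 0 (C : ℝ)) :
    ∫⁻ p, edist (f p) (colCap m h p) ∂(m'.prod ν) ≤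
      (1 + C * m' Set.univ) * ∫⁻ p, edist (f p) (h p) ∂(m'.prod ν) := by
  rw [← lintegral_prod_swap (fun p ↦ edist (f p) (colCap m h p)),
    ← lintegral_prod_swap (fun p ↦ edist (f p) (h p))]
  exact lintegral_edist_rowCap_le hm hf.swap hh.swap hf1 fun p ↦ hhC p.swap

end Distance

section Continuity

variable [TopologicalSpace X] [TopologicalSpace Y] [CompactSpace Y]
  [MeasurableSpace Y] [OpensMeasurableSpace Y] {ν : Measure Y} [IsFiniteMeasure ν]
  {h : X × Y → ℝ}

lemma continuous_integral_prodMk_left [FirstCountableTopology X] [LocallyCompactSpace X]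
    (hh : Continuous h) : Continuous fun x ↦ ∫ y, h (x, y) ∂ν := by
  simpa only [setIntegral_univ] using
    continuous_parametric_integral_of_continuous (μ := ν) (f := fun x y ↦ h (x, y)) hh
      isCompact_univ

lemma continuous_rowCap [FirstCountableTopology X] [LocallyCompactSpace X]
    (hh : Continuous h) : Continuous (rowCap ν h) :=
  have hrow := (continuous_integral_prodMk_left (ν := ν) hh).comp continuous_fst
  hh.div (continuous_const.max hrow) fun _ ↦ (zero_lt_one.trans_le (le_max_left _ _)).ne'

end Continuity

section Column

variable [MeasurableSpace X] (ν : Measure X) {h : X × Y → ℝ}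

lemma colCap_nonneg {p : X × Y} (hp : 0 ≤ h p) : 0 ≤ colCap ν h p :=
  rowCap_nonneg ν (h := h ∘ Prod.swap) (p := p.swap) hp

lemma colCap_le_self {p : X × Y} (hp : 0 ≤ h p) : colCap ν h p ≤ h p :=
  rowCap_le_self ν (h := h ∘ Prod.swap) (p := p.swap) hp

lemma integral_colCap_le_one (h : X × Y → ℝ) (y : Y) : ∫ x, colCap ν h (x, y) ∂ν ≤ 1 :=
  integral_rowCap_le_one ν (h ∘ Prod.swap) y

lemma continuous_colCap [TopologicalSpace X] [TopologicalSpace Y] [CompactSpace X]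
    [OpensMeasurableSpace X] [FirstCountableTopology Y] [LocallyCompactSpace Y]
    [IsFiniteMeasure ν] (hh : Continuous h) : Continuous (colCap ν h) :=
  (continuous_rowCap (ν := ν) (hh.comp continuous_swap)).comp continuous_swap

end Column

end Capping

section Filling

variable {X Y : Type*} [MeasurableSpace X] [MeasurableSpace Y]

/-- The function obtained from `h` by adding the rank-one function `a ⊗ b / s` formed from its
row deficits `a`, its column deficits `b` and its total deficit `s`, so that all rows and columns
of a suitable `h` acquire mass `1`. When `s = 0`, all deficits of a continuous `h` with row and
column masses at most `1` vanish, and the convention `b / 0 = 0` leaves `h` unchanged. -/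
def fillDeficit (ν : Measure X) (ν' : Measure Y) (h : X × Y → ℝ) (p : X × Y) : ℝ :=
  h p + (1 - ∫ y, h (p.1, y) ∂ν') *
    ((1 - ∫ x, h (x, p.2) ∂ν) / (1 - ∫ q, h q ∂(ν.prod ν')))

section Distance

variable {ν : Measure X} {ν' : Measure Y} [IsProbabilityMeasure ν] [IsProbabilityMeasure ν']
  {h : X × Y → ℝ}

lemma integral_one_sub_integral_prodMk_left (hh : Integrable h (ν.prod ν')) :
    ∫ x, (1 - ∫ y, h (x, y) ∂ν') ∂ν = 1 - ∫ q, h q ∂(ν.prod ν') := by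
  rw [integral_sub (integrable_const _) hh.integral_prod_left, integral_prod _ hh]
  simp

lemma integral_one_sub_integral_prodMk_right (hh : Integrable h (ν.prod ν')) :
    ∫ y, (1 - ∫ x, h (x, y) ∂ν) ∂ν' = 1 - ∫ q, h q ∂(ν.prod ν') := by
  rw [integral_sub (integrable_const _) hh.integral_prod_right, integral_prod_symm _ hh]
  simp

lemma lintegral_edist_fillDeficit_le {m : Measure X} [SFinite m] {f : X × Y → ℝ}
    (hf : Integrable f (m.prod ν')) (hhm : Integrable h (m.prod ν'))
    (hh : Integrable h (ν.prod ν')) (hf1 : ∀ x, ∫ y, f (x, y) ∂ν' = 1)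
    (hcol : ∀ y, ∫ x, h (x, y) ∂ν ≤ 1) :
    ∫⁻ p, edist (h p) (fillDeficit ν ν' h p) ∂(m.prod ν') ≤
      ∫⁻ p, edist (f p) (h p) ∂(m.prod ν') := by
  set s := 1 - ∫ q, h q ∂(ν.prod ν')
  set a : X → ℝ := fun x ↦ 1 - ∫ y, h (x, y) ∂ν'
  set b : Y → ℝ := fun y ↦ 1 - ∫ x, h (x, y) ∂ν
  have ha : AEMeasurable a m :=
    (aestronglyMeasurable_const.sub hhm.integral_prod_left.1).aemeasurable
  have hb : Integrable b ν' := (integrable_const _).sub hh.integral_prod_right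
  have hbs : ∫ y, b y ∂ν' = s := integral_one_sub_integral_prodMk_right hh
  have hb0 : 0 ≤ b := fun y ↦ sub_nonneg.2 (hcol y)
  have hb_le : ∫⁻ y, ‖b y / s‖ₑ ∂ν' ≤ 1 := by
    have hs0 : 0 ≤ s := hbs ▸ integral_nonneg hb0
    rw [← ofReal_integral_norm_eq_lintegral_enorm (hb.div_const s), ENNReal.ofReal_le_one]
    simp only [Real.norm_of_nonneg (div_nonneg (hb0 _) hs0), integral_div, hbs]
    exact div_self_le_one s
  calc ∫⁻ p, edist (h p) (fillDeficit ν ν' h p) ∂(m.prod ν')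
      = ∫⁻ p, ‖a p.1‖ₑ * ‖b p.2 / s‖ₑ ∂(m.prod ν') := by
        simp only [fillDeficit, edist_eq_enorm_sub, sub_add_cancel_left, enorm_neg, enorm_mul, a, b,
          s]
    _ = (∫⁻ x, ‖a x‖ₑ ∂m) * ∫⁻ y, ‖b y / s‖ₑ ∂ν' :=
        lintegral_prod_mul ha.enorm (hb.1.aemeasurable.div_const s).enorm
    _ ≤ ∫⁻ x, ‖a x‖ₑ ∂m := mul_le_of_le_one_right' hb_le
    _ ≤ ∫⁻ p, edist (f p) (h p) ∂(m.prod ν') := by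
        simpa only [hf1, edist_eq_enorm_sub] using lintegral_edist_integral_le hf hhm

lemma fillDeficit_nonneg (hh : Integrable h (ν.prod ν')) (hh0 : ∀ p, 0 ≤ h p)
    (hrow : ∀ x, ∫ y, h (x, y) ∂ν' ≤ 1) (hcol : ∀ y, ∫ x, h (x, y) ∂ν ≤ 1) (p : X × Y) :
    0 ≤ fillDeficit ν ν' h p := by
  have hs : 0 ≤ 1 - ∫ q, h q ∂(ν.prod ν') :=
    integral_one_sub_integral_prodMk_right hh ▸ integral_nonneg fun y ↦ sub_nonneg.2 (hcol y)
  exact add_nonneg (hh0 p)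
    (mul_nonneg (sub_nonneg.2 (hrow _)) (div_nonneg (sub_nonneg.2 (hcol _)) hs))

lemma fillDeficit_swap (h : X × Y → ℝ) (p : X × Y) :
    fillDeficit ν' ν (h ∘ Prod.swap) p.swap = fillDeficit ν ν' h p := by
  simp only [fillDeficit, Function.comp_apply, Prod.swap_swap, Prod.fst_swap, Prod.snd_swap,
    Prod.swap_prod_mk, integral_prod_swap]
  rw [mul_div_left_comm]

lemma integral_fillDeficit_prodMk_left [TopologicalSpace X] [ν.IsOpenPosMeasure]
    (hh : Integrable h (ν.prod ν')) (hhrow : ∀ x, Integrable (fun y ↦ h (x, y)) ν')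
    (hrowc : Continuous fun x ↦ ∫ y, h (x, y) ∂ν') (hrow : ∀ x, ∫ y, h (x, y) ∂ν' ≤ 1) (x : X) :
    ∫ y, fillDeficit ν ν' h (x, y) ∂ν' = 1 := by
  set s := 1 - ∫ q, h q ∂(ν.prod ν')
  set a : X → ℝ := fun x ↦ 1 - ∫ y, h (x, y) ∂ν'
  have ha_of_s : s = 0 → a x = 0 := fun hs ↦ by
    have ha_ae : a =ᵐ[ν] 0 :=
      (integral_eq_zero_iff_of_nonneg (fun x ↦ sub_nonneg.2 (hrow x))
        ((integrable_const _).sub hh.integral_prod_left)).1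
        ((integral_one_sub_integral_prodMk_left hh).trans hs)
    exact congrFun (((continuous_const.sub hrowc).ae_eq_iff_eq ν continuous_zero).1 ha_ae) x
  have hfill : Integrable (fun y ↦ a x * ((1 - ∫ x, h (x, y) ∂ν) / s)) ν' :=
    (((integrable_const _).sub hh.integral_prod_right).div_const s).const_mul (a x)
  have hadd : ∫ y, fillDeficit ν ν' h (x, y) ∂ν' = ∫ y, h (x, y) ∂ν' + a x * (s / s) := by
    simp only [fillDeficit]
    rw [integral_add (hhrow x) hfill, integral_const_mul, integral_div,
      integral_one_sub_integral_prodMk_right hh]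
  rw [hadd, ← mul_div_assoc, mul_div_cancel_of_imp ha_of_s, add_sub_cancel]

lemma integral_fillDeficit_prodMk_right [TopologicalSpace Y] [ν'.IsOpenPosMeasure]
    (hh : Integrable h (ν.prod ν')) (hhcol : ∀ y, Integrable (fun x ↦ h (x, y)) ν)
    (hcolc : Continuous fun y ↦ ∫ x, h (x, y) ∂ν) (hcol : ∀ y, ∫ x, h (x, y) ∂ν ≤ 1) (y : Y) :
    ∫ x, fillDeficit ν ν' h (x, y) ∂ν = 1 := by
  simp only [← fillDeficit_swap (ν := ν) h]
  exact integral_fillDeficit_prodMk_left hh.swap hhcol hcolc hcol y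

end Distance

lemma continuous_fillDeficit {X Y : Type*} [TopologicalSpace X] [TopologicalSpace Y]
    [CompactSpace X] [CompactSpace Y] [LocallyCompactSpace X] [LocallyCompactSpace Y]
    [FirstCountableTopology X] [FirstCountableTopology Y] [MeasurableSpace X] [MeasurableSpace Y]
    [OpensMeasurableSpace X] [OpensMeasurableSpace Y] {ν : Measure X} {ν' : Measure Y}
    [IsFiniteMeasure ν] [IsFiniteMeasure ν'] {h : X × Y → ℝ} (hh : Continuous h) :
    Continuous (fillDeficit ν ν' h) := by
  have hrow : Continuous fun x ↦ ∫ y, h (x, y) ∂ν' := continuous_integral_prodMk_left hh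
  have hcol : Continuous fun y ↦ ∫ x, h (x, y) ∂ν :=
    continuous_integral_prodMk_left (hh.comp continuous_swap)
  exact hh.add ((continuous_const.sub (hrow.comp continuous_fst)).mul
    ((continuous_const.sub (hcol.comp continuous_snd)).div_const _))

end Filling

section FairApproximation

variable {f g h : Sq → ℝ} {C : ℝ≥0}

instance : (volume : Measure unitInterval).IsOpenPosMeasure where
  open_pos U hU hne := by
    obtain ⟨a, b, hab, hIoo⟩ := hU.exists_Ioo_subset hne
    refine ne_of_gt (lt_of_lt_of_le ?_ (measure_mono hIoo))
    rw [unitInterval.volume_Ioo, ENNReal.ofReal_pos, sub_pos]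
    exact hab

lemma fairlyDistributed_fillDeficit (hh : Continuous h) (hh0 : ∀ p, 0 ≤ h p)
    (hrow : ∀ x, ∫ y, h (x, y) ≤ 1) (hcol : ∀ y, ∫ x, h (x, y) ≤ 1) :
    FairlyDistributed (fillDeficit volume volume h) := by
  have hcont : Continuous (fillDeficit volume volume h) := continuous_fillDeficit hh
  have hint : Integrable h (volume.prod volume) :=
    hh.integrable_of_hasCompactSupport (.of_compactSpace h)
  have hsection : ∀ {k : unitInterval → ℝ}, Continuous k → Integrable k := fun hk ↦
    hk.integrable_of_hasCompactSupport (.of_compactSpace _)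
  obtain ⟨B, hB⟩ := (isCompact_range hcont).bddAbove
  exact
    { measurable := hcont.measurable
      nonneg := fillDeficit_nonneg hint hh0 hrow hcol
      bounded := ⟨B, fun p ↦ hB (Set.mem_range_self p)⟩
      row := integral_fillDeficit_prodMk_left hint (fun x ↦ hsection (by fun_prop))
        (continuous_integral_prodMk_left hh) hrow
      col := integral_fillDeficit_prodMk_right hint (fun y ↦ hsection (by fun_prop))
        (continuous_integral_prodMk_left (hh.comp continuous_swap)) hcol }

/-- The correction of a nonnegative continuous `h` to a fairly distributed function: rows and then
columns are capped at mass `1`, and the remaining deficits are filled. -/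
def fairify (h : Sq → ℝ) : Sq → ℝ :=
  fillDeficit volume volume (colCap volume (rowCap volume h))

lemma continuous_fairify (hh : Continuous h) : Continuous (fairify h) :=
  continuous_fillDeficit (continuous_colCap volume (continuous_rowCap hh))

lemma integral_colCap_rowCap_le_one (hh : Continuous h) (hh0 : ∀ p, 0 ≤ h p)
    (x : unitInterval) : ∫ y, colCap volume (rowCap volume h) (x, y) ≤ 1 := by
  have hrowCap : Continuous (rowCap volume h) := continuous_rowCap hh
  have hcolCap := continuous_colCap volume hrowCap
  refine (integral_mono ?_ ?_ fun y ↦ ?_).trans (integral_rowCap_le_one volume h x)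
  · exact Continuous.integrable_of_hasCompactSupport (by fun_prop) (.of_compactSpace _)
  · exact Continuous.integrable_of_hasCompactSupport (by fun_prop) (.of_compactSpace _)
  · exact colCap_le_self volume (rowCap_nonneg volume (hh0 _))

lemma fairlyDistributed_fairify (hh : Continuous h) (hh0 : ∀ p, 0 ≤ h p) :
    FairlyDistributed (fairify h) :=
  fairlyDistributed_fillDeficit (continuous_colCap volume (continuous_rowCap hh))
    (fun p ↦ colCap_nonneg volume (rowCap_nonneg volume (hh0 p)))
    (integral_colCap_rowCap_le_one hh hh0)
    (integral_colCap_le_one volume (rowCap volume h))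

namespace FairlyDistributed

lemma exists_mem_Icc (hf : FairlyDistributed f) : ∃ C : ℝ≥0, ∀ p, f p ∈ Set.Icc 0 (C : ℝ) := by
  obtain ⟨C, hC⟩ := hf.bounded
  exact ⟨C.toNNReal, fun p ↦ ⟨hf.nonneg p, (hC p).trans (Real.le_coe_toNNReal C)⟩⟩

lemma integrable (hf : FairlyDistributed f) {P : Measure Sq} [IsFiniteMeasure P] :
    Integrable f P := by
  obtain ⟨C, hC⟩ := hf.exists_mem_Icc
  exact .of_mem_Icc 0 C hf.measurable.aemeasurable (.of_forall hC)

lemma lintegral_enorm_row (hf : FairlyDistributed f) (x : unitInterval) :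
    ∫⁻ v, ‖f (x, v)‖ₑ = 1 := by
  have hint : Integrable fun v ↦ f (x, v) :=
    .of_integral_ne_zero (by rw [hf.row]; exact one_ne_zero)
  rw [← ofReal_integral_norm_eq_lintegral_enorm hint]
  simp only [Real.norm_of_nonneg (hf.nonneg _), hf.row, ENNReal.ofReal_one]

lemma lintegral_edist_fairify_le (hf : FairlyDistributed f) {m : Measure unitInterval}
    [IsFiniteMeasure m] (hm : volume ≤ m) (hh : Continuous h)
    (hhC : ∀ p, h p ∈ Set.Icc 0 (C : ℝ)) :
    ∫⁻ p, edist (f p) (fairify h p) ∂(m.prod volume) ≤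
      2 * ((1 + C * m Set.univ) * (1 + C)) * ∫⁻ p, edist (f p) (h p) ∂(m.prod volume) := by
  set P := m.prod (volume : Measure unitInterval)
  set h₁ := rowCap volume h
  set h₂ := colCap volume h₁
  have hint : ∀ {k : Sq → ℝ}, Continuous k → ∀ (Q : Measure Sq) [IsFiniteMeasure Q],
      Integrable k Q := fun hk Q ↦ hk.integrable_of_hasCompactSupport (.of_compactSpace _)
  have hh₁ : Continuous h₁ := continuous_rowCap hh
  have hh₂ : Continuous h₂ := continuous_colCap volume hh₁
  have hh₁C : ∀ p, h₁ p ∈ Set.Icc 0 (C : ℝ) := fun p ↦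
    ⟨rowCap_nonneg volume (hhC p).1, (rowCap_le_self volume (hhC p).1).trans (hhC p).2⟩
  have hcapRow : ∫⁻ p, edist (f p) (h₁ p) ∂P ≤ (1 + C) * ∫⁻ p, edist (f p) (h p) ∂P := by
    simpa only [measure_univ, mul_one] using
      lintegral_edist_rowCap_le le_rfl hf.integrable (hint hh P) hf.row hhC
  have hcapCol : ∫⁻ p, edist (f p) (h₂ p) ∂P ≤
      (1 + C * m Set.univ) * ∫⁻ p, edist (f p) (h₁ p) ∂P :=
    lintegral_edist_colCap_le hm hf.integrable (hint hh₁ P) hf.col hh₁C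
  have hfill : ∫⁻ p, edist (h₂ p) (fairify h p) ∂P ≤ ∫⁻ p, edist (f p) (h₂ p) ∂P :=
    lintegral_edist_fillDeficit_le hf.integrable (hint hh₂ P) (hint hh₂ _) hf.row
      (integral_colCap_le_one volume h₁)
  calc ∫⁻ p, edist (f p) (fairify h p) ∂P
      ≤ ∫⁻ p, (edist (f p) (h₂ p) + edist (h₂ p) (fairify h p)) ∂P :=
        lintegral_mono fun p ↦ edist_triangle _ _ _
    _ = ∫⁻ p, edist (f p) (h₂ p) ∂P + ∫⁻ p, edist (h₂ p) (fairify h p) ∂P :=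
        lintegral_add_left (hf.measurable.edist hh₂.measurable) _
    _ ≤ 2 * ∫⁻ p, edist (f p) (h₂ p) ∂P := by
        rw [two_mul]
        gcongr
    _ ≤ 2 * ((1 + C * m Set.univ) * ((1 + C) * ∫⁻ p, edist (f p) (h p) ∂P)) := by
        gcongr
        exact hcapCol.trans (by gcongr)
    _ = 2 * ((1 + C * m Set.univ) * (1 + C)) * ∫⁻ p, edist (f p) (h p) ∂P := by
        ring

theorem exists_continuous_lintegral_edist_le (hf : FairlyDistributed f)
    (m : Measure unitInterval) [IsFiniteMeasure m] {ε : ℝ≥0∞} (hε : ε ≠ 0) :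
    ∃ g, FairlyDistributed g ∧ Continuous g ∧
      ∫⁻ p, edist (f p) (g p) ∂(m.prod volume) ≤ ε := by
  obtain ⟨C, hC⟩ := hf.exists_mem_Icc
  set m' := m + volume
  set K : ℝ≥0∞ := 2 * ((1 + C * m' Set.univ) * (1 + C))
  have hK : K ≠ ∞ := by finiteness
  have hK0 : K ≠ 0 := by positivity
  obtain ⟨h, hh, hhC, hfh⟩ := exists_continuous_mem_Icc_lintegral_edist_le
    (hf.integrable (P := m'.prod volume)) hC C.coe_nonneg (ENNReal.div_ne_zero.2 ⟨hε, hK⟩)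
  refine ⟨fairify h, fairlyDistributed_fairify hh fun p ↦ (hhC p).1, continuous_fairify hh, ?_⟩
  calc ∫⁻ p, edist (f p) (fairify h p) ∂(m.prod volume)
      ≤ ∫⁻ p, edist (f p) (fairify h p) ∂(m'.prod volume) :=
        lintegral_mono' (Measure.prod_mono (Measure.le_add_right le_rfl) le_rfl) le_rfl
    _ ≤ K * ∫⁻ p, edist (f p) (h p) ∂(m'.prod volume) :=
        hf.lintegral_edist_fairify_le (Measure.le_add_left le_rfl) hh hhC
    _ ≤ K * (ε / K) := by gcongr
    _ = ε := ENNReal.mul_div_cancel hK0 hK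

end FairlyDistributed

end FairApproximation

section Density

variable {f g : Sq → ℝ} {μ : Measure Sq}

lemma lintegral_edist_mul_prod_le {X Y R : Type*} [MeasurableSpace X] [MeasurableSpace Y]
    [NormedRing R] {ν : Measure X} {ν' : Measure Y} [SFinite ν'] {a c : X → R} {b d : Y → R}
    (ha : AEStronglyMeasurable a ν) (hc : AEStronglyMeasurable c ν)
    (hb : AEStronglyMeasurable b ν') (hd : AEStronglyMeasurable d ν') :
    ∫⁻ p, edist (a p.1 * b p.2) (c p.1 * d p.2) ∂(ν.prod ν') ≤
      (∫⁻ x, edist (a x) (c x) ∂ν) * (∫⁻ y, ‖b y‖ₑ ∂ν') +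
        (∫⁻ x, ‖c x‖ₑ ∂ν) * ∫⁻ y, edist (b y) (d y) ∂ν' := by
  rw [← lintegral_prod_mul (ha.edist hc) hb.enorm, ← lintegral_prod_mul hc.enorm (hb.edist hd),
    ← lintegral_add_left' ((ha.edist hc).comp_fst.fun_mul hb.enorm.comp_snd)]
  exact lintegral_mono fun p ↦ edist_mul_mul_le_edist_mul_enorm_add _ _ _ _

namespace FairlyDistributed

lemma phiFn_nonneg (hf : FairlyDistributed f) (p : Sq) : 0 ≤ phiFn f μ p :=
  integral_nonneg fun _ ↦ mul_nonneg (hf.nonneg _) (hf.nonneg _)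

lemma integrable_phiFn_kernel (hf : FairlyDistributed f) [IsFiniteMeasure μ] :
    Integrable (fun z : Sq × Sq ↦ f (z.2.1, z.1.1) * f (z.2.2, z.1.2)) (volume.prod μ) := by
  obtain ⟨C, hC⟩ := hf.exists_mem_Icc
  have hfm := hf.measurable
  refine .of_mem_Icc 0 (C * C) (by fun_prop) (.of_forall fun z ↦ ?_)
  exact ⟨mul_nonneg (hf.nonneg _) (hf.nonneg _),
    mul_le_mul (hC _).2 (hC _).2 (hf.nonneg _) C.coe_nonneg⟩

lemma integrable_phiFn (hf : FairlyDistributed f) [IsFiniteMeasure μ] : Integrable (phiFn f μ) :=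
  hf.integrable_phiFn_kernel.integral_prod_left

lemma integral_phiFn (hf : FairlyDistributed f) [IsProbabilityMeasure μ] :
    ∫ p, phiFn f μ p = 1 := by
  have hsection : ∀ q : Sq, ∫ p : Sq, f (q.1, p.1) * f (q.2, p.2) = 1 := fun q ↦ by
    rw [Measure.volume_eq_prod, integral_prod_mul (fun u ↦ f (q.1, u)) (fun v ↦ f (q.2, v)),
      hf.row, hf.row, one_mul]
  simp only [phiFn]
  rw [integral_integral_swap hf.integrable_phiFn_kernel]
  simp only [hsection, integral_const, probReal_univ, smul_eq_mul, one_mul]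

lemma isProbabilityMeasure_phiMeas (hf : FairlyDistributed f) [IsProbabilityMeasure μ] :
    IsProbabilityMeasure (PhiMeas f μ) := by
  refine ⟨?_⟩
  rw [PhiMeas, withDensity_apply _ .univ, setLIntegral_univ,
    ← ofReal_integral_eq_lintegral_ofReal hf.integrable_phiFn (.of_forall hf.phiFn_nonneg),
    hf.integral_phiFn, ENNReal.ofReal_one]

lemma lintegral_edist_phiFn_le (hf : FairlyDistributed f) (hg : FairlyDistributed g)
    [IsFiniteMeasure μ] :
    ∫⁻ p, edist (phiFn f μ p) (phiFn g μ p) ≤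
      ∫⁻ p, edist (f p) (g p) ∂((μ.fst + μ.snd).prod volume) := by
  have hfm := hf.measurable
  have hgm := hg.measurable
  set D : unitInterval → ℝ≥0∞ := fun x ↦ ∫⁻ v, edist (f (x, v)) (g (x, v))
  have hD : Measurable D := (hfm.edist hgm).lintegral_prod_right'
  have hsection : ∀ q : Sq, ∫⁻ p : Sq, edist (f (q.1, p.1) * f (q.2, p.2))
      (g (q.1, p.1) * g (q.2, p.2)) ≤ D q.1 + D q.2 := fun q ↦ by
    have hrow : ∀ {k : Sq → ℝ}, Measurable k → ∀ x : unitInterval,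
        AEStronglyMeasurable (fun v ↦ k (x, v)) := fun hk x ↦
      (hk.comp measurable_prodMk_left).aestronglyMeasurable
    simpa only [hf.lintegral_enorm_row, hg.lintegral_enorm_row, mul_one, one_mul] using!
      lintegral_edist_mul_prod_le (hrow hfm q.1) (hrow hgm q.1) (hrow hfm q.2) (hrow hgm q.2)
  calc ∫⁻ p, edist (phiFn f μ p) (phiFn g μ p)
      ≤ ∫⁻ z : Sq × Sq, edist (f (z.2.1, z.1.1) * f (z.2.2, z.1.2))
          (g (z.2.1, z.1.1) * g (z.2.2, z.1.2)) ∂(volume.prod μ) :=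
        lintegral_edist_integral_le hf.integrable_phiFn_kernel hg.integrable_phiFn_kernel
    _ = ∫⁻ q, (∫⁻ p : Sq, edist (f (q.1, p.1) * f (q.2, p.2))
          (g (q.1, p.1) * g (q.2, p.2))) ∂μ :=
        lintegral_prod_symm _ (by fun_prop)
    _ ≤ ∫⁻ q, (D q.1 + D q.2) ∂μ := lintegral_mono hsection
    _ = ∫⁻ x, D x ∂(μ.fst + μ.snd) := by
        rw [lintegral_add_left (by fun_prop), lintegral_add_measure, Measure.fst,
          Measure.snd, lintegral_map hD measurable_fst, lintegral_map hD measurable_snd]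
    _ = ∫⁻ p, edist (f p) (g p) ∂((μ.fst + μ.snd).prod volume) :=
        (lintegral_prod _ (hfm.edist hgm).aemeasurable).symm

end FairlyDistributed

lemma phiFn_swap (hf : Measurable f) (hμ : IsSymmSq μ) (p : Sq) :
    phiFn f μ p.swap = phiFn f μ p :=
  calc phiFn f μ p.swap
      = ∫ q, f (q.1, p.2) * f (q.2, p.1) ∂(μ.map Prod.swap) := by rw [hμ]; rfl
    _ = ∫ q, f (q.2, p.2) * f (q.1, p.1) ∂μ :=
        integral_map measurable_swap.aemeasurable (by fun_prop)
    _ = phiFn f μ p := by simp only [phiFn, mul_comm]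

lemma isSymmSq_phiMeas (hf : Measurable f) (hμ : IsSymmSq μ) : IsSymmSq (PhiMeas f μ) := by
  have hswap : MeasurePreserving (Prod.swap : Sq → Sq) := Measure.measurePreserving_swap
  ext s hs
  rw [Measure.map_apply measurable_swap hs, PhiMeas,
    withDensity_apply _ (measurable_swap hs), withDensity_apply _ hs]
  simpa only [phiFn_swap hf hμ] using
    hswap.setLIntegral_comp_preimage_emb MeasurableEquiv.prodComm.measurableEmbedding
      (fun p ↦ ENNReal.ofReal (phiFn f μ p)) s

end Density

section Shape

variable {f : Sq → ℝ}

instance (μ : SGraphon) : IsProbabilityMeasure μ.toMeasure := μ.1.2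

/-- The measure `Φ(f,μ)` as an s-graphon, so that the weak topology applies to it. -/
def SGraphon.phi (μ : SGraphon) (hf : FairlyDistributed f) : SGraphon :=
  ⟨⟨PhiMeas f μ.toMeasure, hf.isProbabilityMeasure_phiMeas⟩, isSymmSq_phiMeas hf.measurable μ.2⟩

lemma SGraphon.tendsto_phi {ι : Type*} {l : Filter ι} {g : ι → Sq → ℝ} (μ : SGraphon)
    (hg : ∀ i, FairlyDistributed (g i)) (hf : FairlyDistributed f)
    (hlim : Tendsto (fun i ↦ ∫⁻ p, edist (f p) (g i p)
      ∂((μ.toMeasure.fst + μ.toMeasure.snd).prod volume)) l (𝓝 0)) :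
    Tendsto (fun i ↦ μ.phi (hg i)) l (𝓝 (μ.phi hf)) := by
  refine tendsto_subtype_rng.2 (tendsto_of_tendsto_lintegral_edist_density
    (fun i ↦ (hg i).integrable_phiFn) hf.integrable_phiFn (fun i ↦ (hg i).phiFn_nonneg)
    hf.phiFn_nonneg (fun i ↦ rfl) rfl ?_)
  refine tendsto_of_tendsto_of_tendsto_of_le_of_le tendsto_const_nhds hlim (fun _ ↦ zero_le)
    fun i ↦ ?_
  simpa only [edist_comm] using hf.lintegral_edist_phiFn_le (hg i)

theorem SGraphon.phi_mem_shape (μ : SGraphon) (hf : FairlyDistributed f) :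
    μ.phi hf ∈ shape μ := by
  choose g hg hgc hfg using fun n : ℕ ↦ hf.exists_continuous_lintegral_edist_le
    (μ.toMeasure.fst + μ.toMeasure.snd) (ENNReal.inv_ne_zero.2 (ENNReal.natCast_ne_top n))
  have hlim := tendsto_of_tendsto_of_tendsto_of_le_of_le tendsto_const_nhds
    ENNReal.tendsto_inv_nat_nhds_zero (fun _ ↦ zero_le) hfg
  exact mem_closure_of_tendsto (μ.tendsto_phi hg hf hlim)
    (.of_forall fun n ↦ ⟨g n, hg n, hgc n, rfl⟩)

end Shape

/-- Proposition `prop:BC`. For every s-graphon `μ`, the shape `C(μ)` (the weak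
closure of `{Φ(f,μ) : f ∈ FDC}`) equals the weak closure of `{Φ(f,μ) : f ∈ FD}`, where `FD`
is the set of all bounded Borel fairly distributed functions. -/
theorem stmt6 (μ : SGraphon) :
    shape μ =
      closure {ν : SGraphon | ∃ f : Sq → ℝ, FairlyDistributed f ∧
        ν.toMeasure = PhiMeas f μ.toMeasure} := by
  apply Set.Subset.antisymm
  · refine closure_mono ?_
    rintro ν ⟨f, hf, -, hν⟩
    exact ⟨f, hf, hν⟩
  · refine closure_minimal ?_ isClosed_closure
    rintro ν ⟨f, hf, hν⟩
    have hν_eq : ν = μ.phi hf := Subtype.ext (Subtype.ext hν)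
    exact hν_eq ▸ μ.phi_mem_shape hf

end
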